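/- arXiv:2401.09198 — 7 statements merged into one kernel-verified Lean document; each statement's English description precedes it below -/
import Mathlib

section
/- Suppose z : ℕ → Z and s : ℕ → W form a trajectory of System 1 (z(n+1) = f₁(z(n)), s(n) = h₁(z(n))) with z(0) = e(s(0)). Then for every n ∈ ℕ, the latent prediction ẑ(n) = f̂₁^[n](ê(s(0))) satisfies ‖z(n) − ẑ(n)‖ ≤ δ_f · (∑_{k=0}^{n−1} L_f^k) + L_f^n · δ_e. -/
/-!
Let `z` be an orbit of the true dynamics `f` and `y` an orbit of its `L`-Lipschitz model `g`.
Comparing `f (z n)` with `g (y n)` through `g (z n)` separates the one-step model error, at most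
`δ`, from the inherited error, which `g` amplifies by at most `L`. The distances
`u n = dist (z n) (y n)` therefore satisfy `u (n + 1) ≤ L * u n + δ`, and the discrete Grönwall
inequality bounds them.
-/

open Finset
open scoped NNReal

theorem le_mul_geom_sum_add_pow_mul_of_succ_le {R : Type*} [CommSemiring R] [PartialOrder R]
    [IsOrderedRing R] {u : ℕ → R} {b c : R} (hc : 0 ≤ c) (hu : ∀ n, u (n + 1) ≤ c * u n + b)
    (n : ℕ) : u n ≤ b * (∑ k ∈ range n, c ^ k) + c ^ n * u 0 :=
  calc
    u n ≤ u 0 * c ^ n + ∑ k ∈ range n, b * c ^ (n - 1 - k) := by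
      simpa only [Nat.Ico_zero_eq_range, prod_const, card_range, Nat.card_Ico, Nat.sub_add_eq,
        Nat.sub_right_comm] using discrete_gronwall_prod_general
          (fun n _ ↦ hu n) (fun _ _ ↦ hc) n.zero_le
    _ = b * (∑ k ∈ range n, c ^ k) + c ^ n * u 0 := by
      rw [sum_range_reflect (fun k ↦ b * c ^ k), ← mul_sum, add_comm, mul_comm (u 0)]

section PseudoMetricSpace

variable {X : Type*} [PseudoMetricSpace X] {g : X → X} {L : ℝ≥0} {δ ε : ℝ}

theorem dist_apply_le_mul_dist_add (hg : LipschitzWith L g) {x x' : X} (hx : dist x' (g x) ≤ δ)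
    (y : X) : dist x' (g y) ≤ L * dist x y + δ :=
  calc
    dist x' (g y) ≤ dist x' (g x) + dist (g x) (g y) := dist_triangle _ _ _
    _ ≤ δ + L * dist x y := add_le_add hx (hg.dist_le_mul x y)
    _ = L * dist x y + δ := add_comm _ _

theorem dist_iterate_le_of_dist_succ_le (hg : LipschitzWith L g) {z : ℕ → X}
    (hz : ∀ n, dist (z (n + 1)) (g (z n)) ≤ δ) {y : X} (hy : dist (z 0) y ≤ ε) (n : ℕ) :
    dist (z n) (g^[n] y) ≤ δ * (∑ k ∈ range n, (L : ℝ) ^ k) + L ^ n * ε := by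
  have error_succ (m : ℕ) :
      dist (z (m + 1)) (g^[m + 1] y) ≤ L * dist (z m) (g^[m] y) + δ := by
    rw [Function.iterate_succ_apply']
    exact dist_apply_le_mul_dist_add hg (hz m) _
  calc
    dist (z n) (g^[n] y) ≤ δ * (∑ k ∈ range n, (L : ℝ) ^ k) + L ^ n * dist (z 0) y :=
      le_mul_geom_sum_add_pow_mul_of_succ_le (u := fun m ↦ dist (z m) (g^[m] y))
        L.coe_nonneg error_succ n
    _ ≤ δ * (∑ k ∈ range n, (L : ℝ) ^ k) + L ^ n * ε := by gcongr

theorem latent_state_error_bound_general {W : Type*} {f : X → X} {e e' : W → X}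
    (hg : LipschitzWith L g) (hfg : ∀ x, dist (f x) (g x) ≤ δ) (he : ∀ w, dist (e w) (e' w) ≤ ε)
    {z : ℕ → X} {w : W} (hdyn : ∀ n, z (n + 1) = f (z n)) (hinit : z 0 = e w) (n : ℕ) :
    dist (z n) (g^[n] (e' w)) ≤ δ * (∑ k ∈ range n, (L : ℝ) ^ k) + L ^ n * ε :=
  dist_iterate_le_of_dist_succ_le hg (fun m ↦ hdyn m ▸ hfg (z m)) (hinit ▸ he w) n

end PseudoMetricSpace

/-- For a trajectory of System 1 with `z 0 = e (s 0)`, the latent prediction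
`ẑ n = fh^[n] (eh (s 0))` satisfies
`‖z n - ẑ n‖ ≤ δ_f * (∑_{k<n} L_f^k) + L_f^n * δ_e`. -/
theorem latent_state_error_bound {Z W : Type*}
    [NormedAddCommGroup Z] [NormedSpace ℝ Z]
    [NormedAddCommGroup W] [NormedSpace ℝ W]
    (f₁ fh : Z → Z) (h₁ hh : Z → W) (e eh : W → Z)
    (δf δh δe Lf Lh Le : ℝ)
    (hδf : 0 ≤ δf) (hδh : 0 ≤ δh) (hδe : 0 ≤ δe)
    (hLf : 0 ≤ Lf) (hLh : 0 ≤ Lh) (hLe : 0 ≤ Le)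
    (hlipf : ∀ a b, ‖fh a - fh b‖ ≤ Lf * ‖a - b‖)
    (hliph : ∀ a b, ‖hh a - hh b‖ ≤ Lh * ‖a - b‖)
    (hlipe : ∀ a b, ‖eh a - eh b‖ ≤ Le * ‖a - b‖)
    (herrf : ∀ z, ‖f₁ z - fh z‖ ≤ δf)
    (herrh : ∀ z, ‖h₁ z - hh z‖ ≤ δh)
    (herre : ∀ w, ‖e w - eh w‖ ≤ δe)
    (z : ℕ → Z) (s : ℕ → W)
    (hdyn : ∀ n, z (n + 1) = f₁ (z n))
    (hobs : ∀ n, s n = h₁ (z n))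
    (hinit : z 0 = e (s 0)) :
    ∀ n : ℕ, ‖z n - fh^[n] (eh (s 0))‖ ≤
      δf * (∑ k ∈ Finset.range n, Lf ^ k) + Lf ^ n * δe := by
  lift Lf to ℝ≥0 using hLf
  simp only [← dist_eq_norm] at hlipf herrf herre ⊢
  exact latent_state_error_bound_general (.of_dist_le_mul hlipf) herrf herre hdyn hinit
end

section
/- (Proposition 1, bound (5), 'ours'.) Suppose z : ℕ → Z and s : ℕ → W form a trajectory of System 1 (z(n+1) = f₁(z(n)), s(n) = h₁(z(n))) with z(0) = e(s(0)), and suppose L_f ≠ 1. Define the latent-space prediction ŝ(n) = ĥ₁(f̂₁^[n](ê(s(0)))). Then for every n ∈ ℕ, ‖s(n) − ŝ(n)‖ ≤ δ_h + L_h · (δ_f · (L_f^n − 1)/(L_f − 1) + L_f^n · δ_e). -/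
/-!
A true trajectory is a `δf`-pseudo-orbit of the approximate dynamics `fh`. Its
distance `u n` to the predicted orbit satisfies the affine recurrence `u (n + 1) ≤ Lf * u n + δf`
with `u 0 ≤ δe`, so the discrete Grönwall inequality bounds it by a geometric sum, and the
observation map passes the bound from the latent space to the observation space.
-/

open Finset
open scoped NNReal

theorem le_geom_sum_of_le_mul_add {R : Type*} [CommSemiring R] [PartialOrder R] [IsOrderedRing R]
    {u : ℕ → R} {K δ : R} (hK : 0 ≤ K) (hu : ∀ n, u (n + 1) ≤ K * u n + δ) (n : ℕ) :
    u n ≤ δ * ∑ i ∈ range n, K ^ i + K ^ n * u 0 := by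
  have gronwall : u n ≤ u 0 * K ^ n + ∑ k ∈ range n, δ * K ^ (n - (k + 1)) := by
    simpa using discrete_gronwall_prod_general (c := fun _ ↦ K) (b := fun _ ↦ δ)
      (fun n _ ↦ hu n) (fun _ _ ↦ hK) n.zero_le
  have reflect : ∑ k ∈ range n, K ^ (n - (k + 1)) = ∑ i ∈ range n, K ^ i := by
    simpa only [Nat.sub_sub, add_comm 1] using sum_range_reflect (K ^ ·) n
  rwa [← mul_sum, reflect, add_comm, mul_comm (u 0)] at gronwall

/-- A `δ`-pseudo-orbit of `f`: a sequence that follows `f` up to an error of at most `δ` in each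
step. True trajectories are viewed as pseudo-orbits of the approximate dynamics. The inequality
is non-strict, so that a `0`-pseudo-orbit in a metric space is an orbit. -/
def IsPseudoOrbit {X : Type*} [PseudoMetricSpace X] (f : X → X) (δ : ℝ) (z : ℕ → X) : Prop :=
  ∀ n, dist (z (n + 1)) (f (z n)) ≤ δ

theorem IsPseudoOrbit.dist_iterate_le {X : Type*} [PseudoMetricSpace X] {f : X → X} {K : ℝ≥0}
    {δ : ℝ} {z : ℕ → X} (hz : IsPseudoOrbit f δ z) (hf : LipschitzWith K f) (x : X) (n : ℕ) :
    dist (z n) (f^[n] x) ≤ δ * ∑ i ∈ range n, (K : ℝ) ^ i + K ^ n * dist (z 0) x := by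
  refine le_geom_sum_of_le_mul_add (u := fun n ↦ dist (z n) (f^[n] x)) K.coe_nonneg
    (fun n ↦ ?_) n
  rw [Function.iterate_succ_apply']
  calc dist (z (n + 1)) (f (f^[n] x))
    _ ≤ dist (z (n + 1)) (f (z n)) + dist (f (z n)) (f (f^[n] x)) := dist_triangle ..
    _ ≤ δ + K * dist (z n) (f^[n] x) := add_le_add (hz n) (hf.dist_le_mul ..)
    _ = K * dist (z n) (f^[n] x) + δ := add_comm ..

theorem ours_prediction_error_bound_general {Z W : Type*} [PseudoMetricSpace Z]
    [PseudoMetricSpace W] {fh : Z → Z} {hh : Z → W} {δf δh δe : ℝ} {Lf Lh : ℝ≥0}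
    (hlipf : LipschitzWith Lf fh) (hliph : LipschitzWith Lh hh) {z : ℕ → Z} {s : ℕ → W} {x : Z}
    (hdyn : IsPseudoOrbit fh δf z) (hobs : ∀ n, dist (s n) (hh (z n)) ≤ δh)
    (hinit : dist (z 0) x ≤ δe) (n : ℕ) :
    dist (s n) (hh (fh^[n] x)) ≤
      δh + Lh * (δf * ∑ i ∈ range n, (Lf : ℝ) ^ i + Lf ^ n * δe) := by
  have latent : dist (z n) (fh^[n] x) ≤ δf * ∑ i ∈ range n, (Lf : ℝ) ^ i + Lf ^ n * δe :=
    (hdyn.dist_iterate_le hlipf x n).trans (by gcongr)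
  calc dist (s n) (hh (fh^[n] x))
    _ ≤ dist (s n) (hh (z n)) + dist (hh (z n)) (hh (fh^[n] x)) := dist_triangle ..
    _ ≤ _ := add_le_add (hobs n) (hliph.dist_le_mul_of_le latent)

/-- Proposition 1, bound (5) ("ours"): for a trajectory of System 1 with `z 0 = e (s 0)`
and `L_f ≠ 1`, the latent-space prediction `ŝ n = hh (fh^[n] (eh (s 0)))` satisfies
`‖s n - ŝ n‖ ≤ δ_h + L_h * (δ_f * (L_f^n - 1)/(L_f - 1) + L_f^n * δ_e)`. -/
theorem ours_prediction_error_bound {Z W : Type*}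
    [NormedAddCommGroup Z] [NormedSpace ℝ Z]
    [NormedAddCommGroup W] [NormedSpace ℝ W]
    (f₁ fh : Z → Z) (h₁ hh : Z → W) (e eh : W → Z)
    (δf δh δe Lf Lh Le : ℝ)
    (hδf : 0 ≤ δf) (hδh : 0 ≤ δh) (hδe : 0 ≤ δe)
    (hLf : 0 ≤ Lf) (hLh : 0 ≤ Lh) (hLe : 0 ≤ Le)
    (hLf1 : Lf ≠ 1)
    (hlipf : ∀ a b, ‖fh a - fh b‖ ≤ Lf * ‖a - b‖)
    (hliph : ∀ a b, ‖hh a - hh b‖ ≤ Lh * ‖a - b‖)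
    (hlipe : ∀ a b, ‖eh a - eh b‖ ≤ Le * ‖a - b‖)
    (herrf : ∀ z, ‖f₁ z - fh z‖ ≤ δf)
    (herrh : ∀ z, ‖h₁ z - hh z‖ ≤ δh)
    (herre : ∀ w, ‖e w - eh w‖ ≤ δe)
    (z : ℕ → Z) (s : ℕ → W)
    (hdyn : ∀ n, z (n + 1) = f₁ (z n))
    (hobs : ∀ n, s n = h₁ (z n))
    (hinit : z 0 = e (s 0)) :
    ∀ n : ℕ, ‖s n - hh (fh^[n] (eh (s 0)))‖ ≤
      δh + Lh * (δf * (Lf ^ n - 1) / (Lf - 1) + Lf ^ n * δe) := by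
  lift Lf to ℝ≥0 using hLf
  lift Lh to ℝ≥0 using hLh
  simp only [← dist_eq_norm] at hlipf hliph herrf herrh herre ⊢
  intro n
  rw [mul_div_assoc, ← geom_sum_eq hLf1]
  exact ours_prediction_error_bound_general (.of_dist_le_mul hlipf) (.of_dist_le_mul hliph)
    (fun n ↦ hdyn n ▸ herrf (z n)) (fun n ↦ hobs n ▸ herrh (z n)) (hinit ▸ herre (s 0)) n
end

section
/- Suppose z : ℕ → Z and s : ℕ → W form a trajectory of System 1 (z(n+1) = f₁(z(n)), s(n) = h₁(z(n))) with e(s(n)) = z(n) for all n. Define the classic autoregressive prediction ŝᵃʳ(n) = (ĥ₁ ∘ f̂₁ ∘ ê)^[n](s(0)). Then for every n ≥ 1, ‖s(n) − ŝᵃʳ(n)‖ ≤ δ + L·‖s(n−1) − ŝᵃʳ(n−1)‖, where δ = δ_h + L_h·δ_f + L_h·L_f·δ_e and L = L_h·L_f·L_e. -/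
/-!
Since `e (s n) = z n`, the observations form an orbit of `h₁ ∘ f₁ ∘ e`, and the prediction is an
orbit of `hh ∘ fh ∘ eh`. The latter map is Lipschitz with constant `L = Lh * Lf * Le`, and the two
maps differ by at most `δ`: an error made by an inner map is amplified by the Lipschitz constants of
the approximations applied after it. One step of the orbits therefore adds `δ` to `L` times the
previous error.
-/

open scoped NNReal

section LipschitzApproximation

variable {X Y V : Type*} [PseudoMetricSpace Y] [PseudoMetricSpace V]

theorem dist_le_add_mul_dist_of_lipschitzWith {K : ℝ≥0} {g : Y → V} (hg : LipschitzWith K g)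
    {ε : ℝ} {v : V} {x : Y} (hv : dist v (g x) ≤ ε) (y : Y) :
    dist v (g y) ≤ ε + K * dist x y :=
  calc
    dist v (g y) ≤ dist v (g x) + dist (g x) (g y) := dist_triangle _ _ _
    _ ≤ ε + K * dist x y := add_le_add hv (hg.dist_le_mul x y)

theorem dist_comp_le_add_mul {f f' : X → Y} {g g' : Y → V} {K : ℝ≥0} {δ ε : ℝ}
    (hg' : LipschitzWith K g') (hg : ∀ y, dist (g y) (g' y) ≤ ε)
    (hf : ∀ x, dist (f x) (f' x) ≤ δ) (x : X) :
    dist ((g ∘ f) x) ((g' ∘ f') x) ≤ ε + K * δ :=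
  calc
    dist (g (f x)) (g' (f' x)) ≤ ε + K * dist (f x) (f' x) :=
      dist_le_add_mul_dist_of_lipschitzWith hg' (hg (f x)) (f' x)
    _ ≤ ε + K * δ := by gcongr; exact hf x

theorem dist_iterate_succ_le_add_mul {K : ℝ≥0} {g : Y → Y} (hg : LipschitzWith K g) {ε : ℝ}
    {s : ℕ → Y} {n : ℕ} (hs : dist (s (n + 1)) (g (s n)) ≤ ε) (y : Y) :
    dist (s (n + 1)) (g^[n + 1] y) ≤ ε + K * dist (s n) (g^[n] y) := by
  rw [Function.iterate_succ_apply']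
  exact dist_le_add_mul_dist_of_lipschitzWith hg hs _

end LipschitzApproximation

theorem ar_recursive_error_bound_general {Z W : Type*} [PseudoMetricSpace Z] [PseudoMetricSpace W]
    {f f' : Z → Z} {h h' : Z → W} {e e' : W → Z} {δf δh δe : ℝ} {Lf Lh Le : ℝ≥0}
    (hf' : LipschitzWith Lf f') (hh' : LipschitzWith Lh h') (he' : LipschitzWith Le e')
    (hf : ∀ z, dist (f z) (f' z) ≤ δf) (hh : ∀ z, dist (h z) (h' z) ≤ δh)
    (he : ∀ w, dist (e w) (e' w) ≤ δe)
    {s : ℕ → W} (hs : ∀ n, s (n + 1) = h (f (e (s n)))) (w : W) (n : ℕ) :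
    dist (s (n + 1)) ((h' ∘ f' ∘ e')^[n + 1] w) ≤
      (δh + Lh * δf + Lh * Lf * δe) + (Lh * Lf * Le) * dist (s n) ((h' ∘ f' ∘ e')^[n] w) := by
  have lipschitz_hf : LipschitzWith (Lh * Lf) (h' ∘ f') := hh'.comp hf'
  have lipschitz_hfe : LipschitzWith (Lh * Lf * Le) (h' ∘ f' ∘ e') := lipschitz_hf.comp he'
  have error_hf : ∀ z, dist ((h ∘ f) z) ((h' ∘ f') z) ≤ δh + Lh * δf :=
    dist_comp_le_add_mul hh' hh hf
  have error_hfe : ∀ v, dist (h (f (e v))) ((h' ∘ f' ∘ e') v) ≤ δh + Lh * δf + Lh * Lf * δe :=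
    mod_cast dist_comp_le_add_mul (g := h ∘ f) (g' := h' ∘ f') lipschitz_hf error_hf he
  have pseudo_orbit : dist (s (n + 1)) ((h' ∘ f' ∘ e') (s n)) ≤ δh + Lh * δf + Lh * Lf * δe :=
    hs n ▸ error_hfe (s n)
  exact mod_cast dist_iterate_succ_le_add_mul lipschitz_hfe pseudo_orbit w

/-- Recursive step for the classic autoregressive error: if `e (s n) = z n` for all `n`, then
for `n ≥ 1`, `‖s n - ŝᵃʳ n‖ ≤ δ + L * ‖s (n-1) - ŝᵃʳ (n-1)‖` where
`ŝᵃʳ n = (hh ∘ fh ∘ eh)^[n] (s 0)`, `δ = δ_h + L_h δ_f + L_h L_f δ_e`, `L = L_h L_f L_e`. -/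
theorem ar_recursive_error_bound {Z W : Type*}
    [NormedAddCommGroup Z] [NormedSpace ℝ Z]
    [NormedAddCommGroup W] [NormedSpace ℝ W]
    (f₁ fh : Z → Z) (h₁ hh : Z → W) (e eh : W → Z)
    (δf δh δe Lf Lh Le : ℝ)
    (hδf : 0 ≤ δf) (hδh : 0 ≤ δh) (hδe : 0 ≤ δe)
    (hLf : 0 ≤ Lf) (hLh : 0 ≤ Lh) (hLe : 0 ≤ Le)
    (hlipf : ∀ a b, ‖fh a - fh b‖ ≤ Lf * ‖a - b‖)
    (hliph : ∀ a b, ‖hh a - hh b‖ ≤ Lh * ‖a - b‖)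
    (hlipe : ∀ a b, ‖eh a - eh b‖ ≤ Le * ‖a - b‖)
    (herrf : ∀ z, ‖f₁ z - fh z‖ ≤ δf)
    (herrh : ∀ z, ‖h₁ z - hh z‖ ≤ δh)
    (herre : ∀ w, ‖e w - eh w‖ ≤ δe)
    (z : ℕ → Z) (s : ℕ → W)
    (hdyn : ∀ n, z (n + 1) = f₁ (z n))
    (hobs : ∀ n, s n = h₁ (z n))
    (hinv : ∀ n, e (s n) = z n) :
    ∀ n : ℕ, 1 ≤ n →
      ‖s n - (hh ∘ fh ∘ eh)^[n] (s 0)‖ ≤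
        (δh + Lh * δf + Lh * Lf * δe) +
          (Lh * Lf * Le) * ‖s (n - 1) - (hh ∘ fh ∘ eh)^[n - 1] (s 0)‖ := by
  lift Lf to ℝ≥0 using hLf
  lift Lh to ℝ≥0 using hLh
  lift Le to ℝ≥0 using hLe
  simp only [← dist_eq_norm] at *
  intro n hn
  obtain ⟨n, rfl⟩ := Nat.exists_eq_add_of_le' hn
  have hs k : s (k + 1) = h₁ (f₁ (e (s k))) := by rw [hobs, hdyn, hinv]
  exact ar_recursive_error_bound_general (.of_dist_le_mul hlipf) (.of_dist_le_mul hliph)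
    (.of_dist_le_mul hlipe) herrf herrh herre hs (s 0) n
end

section
/- (Proposition 1, bound (6), classic autoregressive.) Suppose z : ℕ → Z and s : ℕ → W form a trajectory of System 1 (z(n+1) = f₁(z(n)), s(n) = h₁(z(n))) with e(s(n)) = z(n) for all n, and suppose L = L_h·L_f·L_e ≠ 1. Define the classic autoregressive prediction ŝᵃʳ(n) = (ĥ₁ ∘ f̂₁ ∘ ê)^[n](s(0)). Then for every n ≥ 1, ‖s(n) − ŝᵃʳ(n)‖ ≤ δ · (L^n − 1)/(L − 1), where δ = δ_h + L_h·δ_f + L_h·L_f·δ_e. -/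
/-!
Along a trajectory `s (n + 1) = h₁ (f₁ (e (s n)))`, so `s` follows the learned one-step map
`F = hh ∘ fh ∘ eh` up to an error of `δ = δh + Lh * (δf + Lf * δe)` per step. As `F` is Lipschitz
with constant `L = Lh * Lf * Le`, each step multiplies the error accumulated so far by at most `L`
and adds at most `δ`, which sums to `δ * (1 + L + ⋯ + L ^ (n - 1))` after `n` steps.
-/

open scoped NNReal

section Lipschitz

variable {X Y : Type*} [PseudoMetricSpace X] [PseudoMetricSpace Y]

theorem dist_apply_le_add_mul_of_lipschitzWith {K : ℝ≥0} {g : X → Y} (hg : LipschitzWith K g)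
    {x x' : X} {y : Y} {δ ε : ℝ} (hy : dist y (g x) ≤ δ) (hx : dist x x' ≤ ε) :
    dist y (g x') ≤ δ + K * ε :=
  (dist_triangle y (g x) (g x')).trans (add_le_add hy (hg.dist_le_mul_of_le hx))

theorem dist_iterate_le_mul_geom_sum_of_lipschitzWith {K : ℝ≥0} {F : X → X}
    (hF : LipschitzWith K F) {u : ℕ → X} {δ : ℝ} (hu : ∀ n, dist (u (n + 1)) (F (u n)) ≤ δ)
    (n : ℕ) : dist (u n) (F^[n] (u 0)) ≤ δ * ∑ i ∈ Finset.range n, (K : ℝ) ^ i := by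
  induction n with
  | zero => simp
  | succ n ih =>
    rw [Function.iterate_succ_apply']
    calc dist (u (n + 1)) (F (F^[n] (u 0)))
        ≤ δ + K * (δ * ∑ i ∈ Finset.range n, (K : ℝ) ^ i) :=
          dist_apply_le_add_mul_of_lipschitzWith hF (hu n) ih
      _ = δ * ∑ i ∈ Finset.range (n + 1), (K : ℝ) ^ i := by
          rw [geom_sum_succ]
          ring

end Lipschitz

theorem ar_prediction_error_bound_general {Z W : Type*} [PseudoMetricSpace Z]
    [PseudoMetricSpace W] {fh : Z → Z} {hh : Z → W} {eh : W → Z} {Lf Lh Le : ℝ≥0} {δf δh δe : ℝ}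
    (hlipf : LipschitzWith Lf fh) (hliph : LipschitzWith Lh hh) (hlipe : LipschitzWith Le eh)
    {z : ℕ → Z} {s : ℕ → W} (herrf : ∀ n, dist (z (n + 1)) (fh (z n)) ≤ δf)
    (herrh : ∀ n, dist (s n) (hh (z n)) ≤ δh) (herre : ∀ n, dist (z n) (eh (s n)) ≤ δe) (n : ℕ) :
    dist (s n) ((hh ∘ fh ∘ eh)^[n] (s 0)) ≤
      (δh + Lh * δf + Lh * Lf * δe) * ∑ i ∈ Finset.range n, (Lh * Lf * Le : ℝ) ^ i := by
  have latent_step (k : ℕ) : dist (z (k + 1)) (fh (eh (s k))) ≤ δf + Lf * δe :=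
    dist_apply_le_add_mul_of_lipschitzWith hlipf (herrf k) (herre k)
  have observed_step (k : ℕ) :
      dist (s (k + 1)) ((hh ∘ fh ∘ eh) (s k)) ≤ δh + Lh * δf + Lh * Lf * δe :=
    calc dist (s (k + 1)) (hh (fh (eh (s k))))
        ≤ δh + Lh * (δf + Lf * δe) :=
          dist_apply_le_add_mul_of_lipschitzWith hliph (herrh (k + 1)) (latent_step k)
      _ = δh + Lh * δf + Lh * Lf * δe := by ring
  have lipschitz_step : LipschitzWith (Lh * Lf * Le) (hh ∘ fh ∘ eh) :=
    (hliph.comp hlipf).comp hlipe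
  exact_mod_cast dist_iterate_le_mul_geom_sum_of_lipschitzWith lipschitz_step observed_step n

/-- Proposition 1, bound (6), classic autoregressive: if `e (s n) = z n` for all `n` and
`L = L_h L_f L_e ≠ 1`, then for all `n ≥ 1`,
`‖s n - ŝᵃʳ n‖ ≤ δ * (L^n - 1)/(L - 1)` where `ŝᵃʳ n = (hh ∘ fh ∘ eh)^[n] (s 0)` and
`δ = δ_h + L_h δ_f + L_h L_f δ_e`. -/
theorem ar_prediction_error_bound {Z W : Type*}
    [NormedAddCommGroup Z] [NormedSpace ℝ Z]
    [NormedAddCommGroup W] [NormedSpace ℝ W]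
    (f₁ fh : Z → Z) (h₁ hh : Z → W) (e eh : W → Z)
    (δf δh δe Lf Lh Le : ℝ)
    (hδf : 0 ≤ δf) (hδh : 0 ≤ δh) (hδe : 0 ≤ δe)
    (hLf : 0 ≤ Lf) (hLh : 0 ≤ Lh) (hLe : 0 ≤ Le)
    (hL1 : Lh * Lf * Le ≠ 1)
    (hlipf : ∀ a b, ‖fh a - fh b‖ ≤ Lf * ‖a - b‖)
    (hliph : ∀ a b, ‖hh a - hh b‖ ≤ Lh * ‖a - b‖)
    (hlipe : ∀ a b, ‖eh a - eh b‖ ≤ Le * ‖a - b‖)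
    (herrf : ∀ z, ‖f₁ z - fh z‖ ≤ δf)
    (herrh : ∀ z, ‖h₁ z - hh z‖ ≤ δh)
    (herre : ∀ w, ‖e w - eh w‖ ≤ δe)
    (z : ℕ → Z) (s : ℕ → W)
    (hdyn : ∀ n, z (n + 1) = f₁ (z n))
    (hobs : ∀ n, s n = h₁ (z n))
    (hinv : ∀ n, e (s n) = z n) :
    ∀ n : ℕ, 1 ≤ n →
      ‖s n - (hh ∘ fh ∘ eh)^[n] (s 0)‖ ≤
        (δh + Lh * δf + Lh * Lf * δe) *
          ((Lh * Lf * Le) ^ n - 1) / (Lh * Lf * Le - 1) := by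
  intro n _
  lift Lf to ℝ≥0 using hLf
  lift Lh to ℝ≥0 using hLh
  lift Le to ℝ≥0 using hLe
  simp only [← dist_eq_norm] at hlipf hliph hlipe herrf herrh herre ⊢
  rw [mul_div_assoc, ← geom_sum_eq hL1]
  exact ar_prediction_error_bound_general (.of_dist_le_mul hlipf) (.of_dist_le_mul hliph)
    (.of_dist_le_mul hlipe) (fun k => hdyn k ▸ herrf (z k)) (fun k => hobs k ▸ herrh (z k))
    (fun k => hinv k ▸ herre (s k)) n
end

section
/- Suppose z : ℕ → Z and s : ℕ → W form a trajectory of System 1 (z(n+1) = f₁(z(n)), s(n) = h₁(z(n))) with e(s(n)) = z(n) for all n. Define the classic autoregressive prediction ŝᵃʳ(n) = (ĥ₁ ∘ f̂₁ ∘ ê)^[n](s(0)). Then for every n ∈ ℕ, ‖s(n) − ŝᵃʳ(n)‖ ≤ δ · ∑_{k=0}^{n−1} L^k, where δ = δ_h + L_h·δ_f + L_h·L_f·δ_e and L = L_h·L_f·L_e. -/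
/-! By induction, an orbit of a `K`-Lipschitz map `g` drifts from a sequence which follows `g` up to
an error `δ` per step by at most `δ * ∑ k < n, K ^ k`. The observations `s` are such a sequence for
`g = hh ∘ fh ∘ eh`, because `s n ↦ z n ↦ z (n + 1) ↦ s (n + 1)` is approximated by `eh`, `fh`, `hh`
in turn, and each map adds its own error to the inherited one scaled by its Lipschitz constant. -/

open scoped NNReal

section Perturbation

variable {α β : Type*} [PseudoMetricSpace α] [PseudoMetricSpace β]

theorem dist_le_add_mul_of_lipschitzWith {K : ℝ≥0} {g : α → β} (hg : LipschitzWith K g)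
    {x x' : α} {y : β} {δ ε : ℝ} (hy : dist y (g x) ≤ δ) (hx : dist x x' ≤ ε) :
    dist y (g x') ≤ δ + K * ε :=
  (dist_triangle y (g x) (g x')).trans (add_le_add hy (hg.dist_le_mul_of_le hx))

theorem dist_iterate_le_mul_geom_sum {K : ℝ≥0} {g : α → α} (hg : LipschitzWith K g)
    {x : ℕ → α} {δ : ℝ} (hx : ∀ n, dist (x (n + 1)) (g (x n)) ≤ δ) (n : ℕ) :
    dist (x n) (g^[n] (x 0)) ≤ δ * ∑ k ∈ Finset.range n, (K : ℝ) ^ k := by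
  induction n with
  | zero => simp
  | succ n ih =>
    rw [Function.iterate_succ_apply']
    calc dist (x (n + 1)) (g (g^[n] (x 0)))
        ≤ δ + K * (δ * ∑ k ∈ Finset.range n, (K : ℝ) ^ k) :=
          dist_le_add_mul_of_lipschitzWith hg (hx n) ih
      _ = δ * ∑ k ∈ Finset.range (n + 1), (K : ℝ) ^ k := by
          rw [geom_sum_succ]
          ring

end Perturbation

theorem ar_prediction_error_bound_sum_general {Z W : Type*}
    [PseudoMetricSpace Z] [PseudoMetricSpace W]
    {f₁ fh : Z → Z} {h₁ hh : Z → W} {e eh : W → Z} {δf δh δe : ℝ} {Lf Lh Le : ℝ≥0}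
    (hlipf : LipschitzWith Lf fh) (hliph : LipschitzWith Lh hh) (hlipe : LipschitzWith Le eh)
    {z : ℕ → Z} {s : ℕ → W}
    (herrf : ∀ n, dist (f₁ (z n)) (fh (z n)) ≤ δf)
    (herrh : ∀ n, dist (h₁ (z n)) (hh (z n)) ≤ δh)
    (herre : ∀ n, dist (e (s n)) (eh (s n)) ≤ δe)
    (hdyn : ∀ n, z (n + 1) = f₁ (z n))
    (hobs : ∀ n, s n = h₁ (z n))
    (hinv : ∀ n, e (s n) = z n) (n : ℕ) :
    dist (s n) ((hh ∘ fh ∘ eh)^[n] (s 0)) ≤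
      (δh + Lh * δf + Lh * Lf * δe) * ∑ k ∈ Finset.range n, (Lh * Lf * Le : ℝ) ^ k := by
  have hlip : LipschitzWith (Lh * Lf * Le) (hh ∘ fh ∘ eh) := by
    simpa only [mul_assoc] using hliph.comp (hlipf.comp hlipe)
  have one_step_error (m : ℕ) :
      dist (s (m + 1)) ((hh ∘ fh ∘ eh) (s m)) ≤ δh + Lh * δf + Lh * Lf * δe := by
    have latent_error : dist (z m) (eh (s m)) ≤ δe := hinv m ▸ herre m
    have dynamics_error : dist (z (m + 1)) (fh (eh (s m))) ≤ δf + Lf * δe :=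
      dist_le_add_mul_of_lipschitzWith hlipf (hdyn m ▸ herrf m) latent_error
    calc dist (s (m + 1)) (hh (fh (eh (s m))))
        ≤ δh + Lh * (δf + Lf * δe) :=
          dist_le_add_mul_of_lipschitzWith hliph (hobs (m + 1) ▸ herrh (m + 1)) dynamics_error
      _ = δh + Lh * δf + Lh * Lf * δe := by ring
  exact_mod_cast dist_iterate_le_mul_geom_sum hlip one_step_error n

/-- Classic autoregressive error bound (sum form): if `e (s n) = z n` for all `n`, then
`‖s n - ŝᵃʳ n‖ ≤ δ * ∑_{k<n} L^k` where `ŝᵃʳ n = (hh ∘ fh ∘ eh)^[n] (s 0)`,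
`δ = δ_h + L_h δ_f + L_h L_f δ_e` and `L = L_h L_f L_e`. -/
theorem ar_prediction_error_bound_sum {Z W : Type*}
    [NormedAddCommGroup Z] [NormedSpace ℝ Z]
    [NormedAddCommGroup W] [NormedSpace ℝ W]
    (f₁ fh : Z → Z) (h₁ hh : Z → W) (e eh : W → Z)
    (δf δh δe Lf Lh Le : ℝ)
    (hδf : 0 ≤ δf) (hδh : 0 ≤ δh) (hδe : 0 ≤ δe)
    (hLf : 0 ≤ Lf) (hLh : 0 ≤ Lh) (hLe : 0 ≤ Le)
    (hlipf : ∀ a b, ‖fh a - fh b‖ ≤ Lf * ‖a - b‖)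
    (hliph : ∀ a b, ‖hh a - hh b‖ ≤ Lh * ‖a - b‖)
    (hlipe : ∀ a b, ‖eh a - eh b‖ ≤ Le * ‖a - b‖)
    (herrf : ∀ z, ‖f₁ z - fh z‖ ≤ δf)
    (herrh : ∀ z, ‖h₁ z - hh z‖ ≤ δh)
    (herre : ∀ w, ‖e w - eh w‖ ≤ δe)
    (z : ℕ → Z) (s : ℕ → W)
    (hdyn : ∀ n, z (n + 1) = f₁ (z n))
    (hobs : ∀ n, s n = h₁ (z n))
    (hinv : ∀ n, e (s n) = z n) :
    ∀ n : ℕ,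
      ‖s n - (hh ∘ fh ∘ eh)^[n] (s 0)‖ ≤
        (δh + Lh * δf + Lh * Lf * δe) *
          ∑ k ∈ Finset.range n, (Lh * Lf * Le) ^ k := by
  simp only [← dist_eq_norm] at *
  lift Lf to ℝ≥0 using hLf
  lift Lh to ℝ≥0 using hLh
  lift Le to ℝ≥0 using hLe
  exact ar_prediction_error_bound_sum_general (.of_dist_le_mul hlipf) (.of_dist_le_mul hliph)
    (.of_dist_le_mul hlipe) (fun n ↦ herrf (z n)) (fun n ↦ herrh (z n)) (fun n ↦ herre (s n))
    hdyn hobs hinv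
end

section
/- (Comparison of the two upper bounds in Proposition 1.) Let δ_f, δ_h, δ_e, L_f, L_h, L_e be nonnegative reals with L_h·L_e ≥ 1, and let n ≥ 1 be an integer. Then the latent-space ('ours') upper bound is no larger than the classic autoregressive upper bound: δ_h + L_h·δ_f·(∑_{k=0}^{n−1} L_f^k) + L_h·L_f^n·δ_e ≤ (δ_h + L_h·δ_f + L_h·L_f·δ_e) · ∑_{k=0}^{n−1} (L_h·L_f·L_e)^k. -/
/-!
The hypothesis `1 ≤ Lh * Le` says that the latent ratio `Lf` is at most the autoregressive ratio
`Lh * Lf * Le`. Both bounds weigh the same three errors `δh`, `Lh * δf` and `Lh * Lf * δe`: the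
latent scheme by `1`, `∑ k < n, Lf ^ k` and `Lf ^ (n - 1)`, the autoregressive one by its geometric
sum each time. That sum dominates all three weights, the first and the last being single terms of
the latent geometric sum.
-/

section GeomSum

variable {R : Type*} [Semiring R] [PartialOrder R] [IsOrderedRing R] {x y : R}

theorem pow_le_geom_sum (hx : 0 ≤ x) {k n : ℕ} (hk : k < n) :
    x ^ k ≤ ∑ i ∈ Finset.range n, x ^ i :=
  Finset.single_le_sum (f := fun i ↦ x ^ i) (fun i _ ↦ pow_nonneg hx i) (Finset.mem_range.2 hk)

theorem geom_sum_le_geom_sum (hx : 0 ≤ x) (hxy : x ≤ y) (n : ℕ) :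
    ∑ i ∈ Finset.range n, x ^ i ≤ ∑ i ∈ Finset.range n, y ^ i :=
  Finset.sum_le_sum fun i _ ↦ pow_le_pow_left₀ hx hxy i

theorem pow_le_geom_sum_of_le (hx : 0 ≤ x) (hxy : x ≤ y) {k n : ℕ} (hk : k < n) :
    x ^ k ≤ ∑ i ∈ Finset.range n, y ^ i :=
  (pow_le_geom_sum hx hk).trans (geom_sum_le_geom_sum hx hxy n)

end GeomSum

theorem ours_bound_le_ar_bound_general
    {R : Type*} [CommSemiring R] [PartialOrder R] [IsOrderedRing R]
    {δf δh δe Lf Lh Le : R}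
    (hδf : 0 ≤ δf) (hδh : 0 ≤ δh) (hδe : 0 ≤ δe)
    (hLf : 0 ≤ Lf) (hLh : 0 ≤ Lh) (hLhLe : 1 ≤ Lh * Le)
    {n : ℕ} (hn : 1 ≤ n) :
    δh + Lh * δf * (∑ k ∈ Finset.range n, Lf ^ k) + Lh * Lf ^ n * δe ≤
      (δh + Lh * δf + Lh * Lf * δe) * ∑ k ∈ Finset.range n, (Lh * Lf * Le) ^ k := by
  obtain ⟨m, rfl⟩ := Nat.exists_eq_add_of_le' hn
  have ratio_le : Lf ≤ Lh * Lf * Le := by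
    rw [mul_right_comm]
    exact le_mul_of_one_le_left hLf hLhLe
  calc
    _ = δh * Lf ^ 0 + Lh * δf * (∑ k ∈ Finset.range (m + 1), Lf ^ k) + Lh * Lf * δe * Lf ^ m := by
      ring
    _ ≤ δh * (∑ k ∈ Finset.range (m + 1), (Lh * Lf * Le) ^ k) +
          Lh * δf * (∑ k ∈ Finset.range (m + 1), (Lh * Lf * Le) ^ k) +
          Lh * Lf * δe * ∑ k ∈ Finset.range (m + 1), (Lh * Lf * Le) ^ k := by
      gcongr ?_ * ?_ + ?_ * ?_ + ?_ * ?_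
      · exact pow_le_geom_sum_of_le hLf ratio_le m.succ_pos
      · exact geom_sum_le_geom_sum hLf ratio_le (m + 1)
      · exact pow_le_geom_sum_of_le hLf ratio_le m.lt_succ_self
    _ = _ := by rw [add_mul, add_mul]

/-- Comparison of the two upper bounds in Proposition 1: if `L_h * L_e ≥ 1` and `n ≥ 1`, the
latent-space ("ours") upper bound is no larger than the classic autoregressive upper bound. -/
theorem ours_bound_le_ar_bound
    (δf δh δe Lf Lh Le : ℝ)
    (hδf : 0 ≤ δf) (hδh : 0 ≤ δh) (hδe : 0 ≤ δe)
    (hLf : 0 ≤ Lf) (hLh : 0 ≤ Lh) (hLe : 0 ≤ Le)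
    (hLhLe : 1 ≤ Lh * Le)
    (n : ℕ) (hn : 1 ≤ n) :
    δh + Lh * δf * (∑ k ∈ Finset.range n, Lf ^ k) + Lh * Lf ^ n * δe ≤
      (δh + Lh * δf + Lh * Lf * δe) * ∑ k ∈ Finset.range n, (Lh * Lf * Le) ^ k :=
  ours_bound_le_ar_bound_general hδf hδh hδe hLf hLh hLhLe hn
end

section
/- (Proposition 2, error-bound part.) Let S and Z be metric spaces, let Φ : ℝ → S → S satisfy dist(Φ(t, a), Φ(t, b)) ≤ exp(L·t) · dist(a, b) for all a, b ∈ S and all t ≥ 0 (where L ≥ 0), and let O : S → Z be c-expansive for some c > 0. Let s₀ ∈ S, let ẑ ∈ Z satisfy dist(ẑ, O(s₀)) ≤ δ for some δ ≥ 0, and let ŝ₀ ∈ S satisfy dist(ẑ, O(ŝ₀)) ≤ dist(ẑ, O(s')) for every s' ∈ S. Then for every t ≥ 0, dist(Φ(t, s₀), Φ(t, ŝ₀)) ≤ (2/c) · δ · exp(L·t). -/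
section Expansive

variable {X Y : Type*} [PseudoMetricSpace X] [PseudoMetricSpace Y] {f : X → Y}

theorem antilipschitzWith_inv_of_mul_dist_le {c : NNReal} (hc : 0 < c)
    (hf : ∀ a b : X, c * dist a b ≤ dist (f a) (f b)) : AntilipschitzWith c⁻¹ f :=
  AntilipschitzWith.of_le_mul_dist fun a b => by
    rw [NNReal.coe_inv]
    exact (le_inv_mul_iff₀ (NNReal.coe_pos.2 hc)).2 (hf a b)

theorem dist_le_mul_add_of_antilipschitzWith {K : NNReal} (hf : AntilipschitzWith K f)
    {x y : X} {z : Y} {δ ε : ℝ} (hx : dist z (f x) ≤ δ) (hy : dist z (f y) ≤ ε) :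
    dist x y ≤ K * (δ + ε) :=
  calc
    dist x y ≤ K * dist (f x) (f y) := hf.le_mul_dist x y
    _ ≤ K * (dist z (f x) + dist z (f y)) := by gcongr; exact dist_triangle_left _ _ _
    _ ≤ K * (δ + ε) := by gcongr

end Expansive

theorem state_estimation_error_bound_general {S Z : Type*} [PseudoMetricSpace S]
    [PseudoMetricSpace Z] (Φ : ℝ → S → S) (L : ℝ)
    (hΦ : ∀ t : ℝ, 0 ≤ t → ∀ a b : S,
      dist (Φ t a) (Φ t b) ≤ Real.exp (L * t) * dist a b)
    (O : S → Z) (c : ℝ) (hc : 0 < c)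
    (hexp : ∀ a b : S, c * dist a b ≤ dist (O a) (O b))
    (s₀ sh₀ : S) (zh : Z) (δ : ℝ)
    (hnoise : dist zh (O s₀) ≤ δ) (hfit : dist zh (O sh₀) ≤ δ) :
    ∀ t : ℝ, 0 ≤ t → dist (Φ t s₀) (Φ t sh₀) ≤ (2 / c) * δ * Real.exp (L * t) := by
  intro t ht
  lift c to NNReal using hc.le
  have hO : AntilipschitzWith c⁻¹ O := antilipschitzWith_inv_of_mul_dist_le hc hexp
  have hinit : dist s₀ sh₀ ≤ (c⁻¹ : NNReal) * (δ + δ) :=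
    dist_le_mul_add_of_antilipschitzWith hO hnoise hfit
  calc
    dist (Φ t s₀) (Φ t sh₀) ≤ Real.exp (L * t) * dist s₀ sh₀ := hΦ t ht s₀ sh₀
    _ ≤ Real.exp (L * t) * ((c⁻¹ : NNReal) * (δ + δ)) := by gcongr
    _ = (2 / c) * δ * Real.exp (L * t) := by rw [NNReal.coe_inv]; ring

/-- Proposition 2, error-bound part: if the flow `Φ` satisfies the Grönwall estimate
`dist (Φ t a) (Φ t b) ≤ exp (L * t) * dist a b` for `t ≥ 0`, `O` is `c`-expansive,
`zh` is a noisy observation with `dist zh (O s₀) ≤ δ`, and `sh₀` minimizes the distance of its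
observation to `zh`, then `dist (Φ t s₀) (Φ t sh₀) ≤ (2 / c) * δ * exp (L * t)` for `t ≥ 0`. -/
theorem state_estimation_error_bound {S Z : Type*} [MetricSpace S] [MetricSpace Z]
    (Φ : ℝ → S → S) (L : ℝ) (hL : 0 ≤ L)
    (hΦ : ∀ t : ℝ, 0 ≤ t → ∀ a b : S,
      dist (Φ t a) (Φ t b) ≤ Real.exp (L * t) * dist a b)
    (O : S → Z) (c : ℝ) (hc : 0 < c)
    (hexp : ∀ a b : S, c * dist a b ≤ dist (O a) (O b))
    (s₀ sh₀ : S) (zh : Z) (δ : ℝ) (hδ : 0 ≤ δ)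
    (hnoise : dist zh (O s₀) ≤ δ)
    (hmin : ∀ s' : S, dist zh (O sh₀) ≤ dist zh (O s')) :
    ∀ t : ℝ, 0 ≤ t → dist (Φ t s₀) (Φ t sh₀) ≤ (2 / c) * δ * Real.exp (L * t) :=
  state_estimation_error_bound_general Φ L hΦ O c hc hexp s₀ sh₀ zh δ hnoise
    ((hmin s₀).trans hnoise)
end
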